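/- Let X be a finite set, k ≥ 2 an integer, and let S be a family of k-element subsets of X. Suppose that for some real r > 0, whenever X_δ is a random subset of X including each element independently with probability δ = 1/(2p) (p ≥ 2 an integer), we have Pr(∃ S ∈ S : S ⊆ X_δ) > 1/2. Then S contains p pairwise disjoint sets. -/

import Mathlib

open scoped Classical in
/-- The probability that the Bernoulli(`δ`) random subset of `X` (each element
included independently with probability `δ`) satisfies the predicate `E`. -/
noncomputable def bernoulliPr {α : Type*} [DecidableEq α] (X : Finset α) (δ : ℝ)
    (E : Finset α → Prop) : ℝ :=
  ∑ A ∈ X.powerset, (if E A then δ ^ A.card * (1 - δ) ^ (X.card - A.card) else 0)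

/-- The class of index `i` under the colouring `f` of `X`. -/
def colourClass {α : Type*} [DecidableEq α] (X : Finset α) (n : ℕ) (f : X → Fin n) (i : Fin n) :
    Finset α :=
  (Finset.univ.filter (fun x : X => f x = i)).map (Function.Embedding.subtype _)

theorem mem_colourClass {α : Type*} [DecidableEq α] (X : Finset α) (n : ℕ) (f : X → Fin n)
    (i : Fin n) (a : α) : a ∈ colourClass X n f i ↔ ∃ h : a ∈ X, f ⟨a, h⟩ = i := by
  simp [colourClass]

theorem card_colourClass_eq {α : Type*} [DecidableEq α] (X : Finset α) (n : ℕ) (i : Fin n)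
    (A : Finset α) (hA : A ⊆ X) :
    (Finset.univ.filter (fun f : X → Fin n => colourClass X n f i = A)).card
      = (n - 1) ^ (X.card - A.card) := by
  have h1 : Finset.univ.filter (fun f : X → Fin n => colourClass X n f i = A)
      = Fintype.piFinset (fun x : X => if (x : α) ∈ A then {i} else Finset.univ.erase i) := by
    ext f
    simp only [Finset.mem_filter, Finset.mem_univ, true_and, Fintype.mem_piFinset]
    constructor
    · rintro rfl ⟨x, hx⟩
      by_cases h : f ⟨x, hx⟩ = i <;> simp [mem_colourClass, h, hx]
    · intro h
      ext a
      rw [mem_colourClass]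
      constructor
      · rintro ⟨ha, hf⟩
        by_contra hn
        have := h ⟨a, ha⟩
        simp [hn, hf] at this
      · intro ha
        have := h ⟨a, hA ha⟩
        simp only [ha, if_true, Finset.mem_singleton] at this
        exact ⟨hA ha, this⟩
  rw [h1, Fintype.card_piFinset]
  have h2 : ∀ x : X, (if (x : α) ∈ A then ({i} : Finset (Fin n)) else Finset.univ.erase i).card
      = (fun a : α => if a ∈ A then 1 else n - 1) x := by
    intro x
    by_cases h : (x : α) ∈ A <;> simp [h]
  rw [Finset.prod_congr rfl (fun x _ => h2 x),
    Finset.prod_coe_sort X (fun a : α => if a ∈ A then 1 else n - 1),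
    Finset.prod_ite, Finset.prod_const_one, one_mul, Finset.prod_const,
    Finset.filter_notMem_eq_sdiff, Finset.card_sdiff_of_subset hA]

open scoped Classical in
theorem card_colourClass_pred {α : Type*} [DecidableEq α] (X : Finset α) (n : ℕ) (hn : 1 ≤ n)
    (i : Fin n) (E : Finset α → Prop) :
    ((Finset.univ.filter (fun f : X → Fin n => E (colourClass X n f i))).card : ℝ)
      = (n : ℝ) ^ X.card * bernoulliPr X (1 / n) E := by
  have hmaps : ∀ f ∈ Finset.univ.filter (fun f : X → Fin n => E (colourClass X n f i)),
      colourClass X n f i ∈ X.powerset := by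
    intro f _
    rw [Finset.mem_powerset]
    intro a ha
    exact ((mem_colourClass X n f i a).1 ha).1
  rw [Finset.card_eq_sum_card_fiberwise hmaps, bernoulliPr, Finset.mul_sum, Nat.cast_sum]
  refine Finset.sum_congr rfl fun A hA => ?_
  rw [Finset.mem_powerset] at hA
  have hle := Finset.card_le_card hA
  have hn0 : (n : ℝ) ≠ 0 := by positivity
  by_cases hE : E A
  · have : Finset.filter (fun f => colourClass X n f i = A)
        (Finset.univ.filter (fun f : X → Fin n => E (colourClass X n f i)))
        = Finset.univ.filter (fun f : X → Fin n => colourClass X n f i = A) := by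
      ext f
      simp only [Finset.mem_filter, Finset.mem_univ, true_and, and_iff_right_iff_imp]
      rintro rfl
      exact hE
    rw [this, card_colourClass_eq X n i A hA, if_pos hE]
    have e : (n : ℝ) ^ X.card = (n : ℝ) ^ A.card * (n : ℝ) ^ (X.card - A.card) := by
      rw [← pow_add, Nat.add_sub_cancel' hle]
    have e2 : (n : ℝ) ^ A.card * (1 / n) ^ A.card = 1 := by
      rw [← mul_pow, mul_one_div_cancel hn0, one_pow]
    have e3 : (n : ℝ) ^ (X.card - A.card) * (1 - 1 / n) ^ (X.card - A.card)
        = ((n : ℝ) - 1) ^ (X.card - A.card) := by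
      rw [← mul_pow, mul_sub, mul_one_div_cancel hn0, mul_one]
    rw [e, mul_mul_mul_comm, e2, e3, one_mul]
    push_cast [hn]
    rfl
  · rw [if_neg hE, mul_zero, Nat.cast_eq_zero, Finset.card_eq_zero, Finset.filter_eq_empty_iff]
    intro f hf h
    rw [Finset.mem_filter, h] at hf
    exact hE hf.2

/-- If, for `δ = 1/(2p)`, the Bernoulli(`δ`) random subset of `X` contains a
member of `S` with probability greater than `1/2`, then `S` contains `p`
pairwise disjoint sets. -/
theorem disjoint_sets_of_prob_gt_half {α : Type*} [DecidableEq α] (X : Finset α)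
    (k p : ℕ) (hk : 2 ≤ k) (hp : 2 ≤ p) (S : Finset (Finset α))
    (hsub : ∀ A ∈ S, A ⊆ X) (hcard : ∀ A ∈ S, A.card = k)
    (hprob : bernoulliPr X (1 / (2 * p)) (fun B => ∃ A ∈ S, A ⊆ B) > 1 / 2) :
    ∃ P ⊆ S, P.card = p ∧ (P : Set (Finset α)).PairwiseDisjoint id := by
  classical
  obtain ⟨E, hE⟩ : ∃ E : Finset α → Prop, E = fun B => ∃ A ∈ S, A ⊆ B := ⟨_, rfl⟩
  rw [← hE] at hprob
  have hcount := fun i => card_colourClass_pred X (2 * p) (by omega) i E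
  have hdouble : ∑ f : X → Fin (2 * p),
      ((Finset.univ.filter (fun i => E (colourClass X (2 * p) f i))).card : ℝ)
      = ∑ i : Fin (2 * p), ((Finset.univ.filter
        (fun f : X → Fin (2 * p) => E (colourClass X (2 * p) f i))).card : ℝ) := by
    simp only [Finset.card_filter, Nat.cast_sum]
    exact Finset.sum_comm
  have hex : ∃ f : X → Fin (2 * p),
      p ≤ (Finset.univ.filter (fun i => E (colourClass X (2 * p) f i))).card := by
    by_contra! hcon
    have hle : ∑ f : X → Fin (2 * p),
        ((Finset.univ.filter (fun i => E (colourClass X (2 * p) f i))).card : ℝ)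
        ≤ ∑ f : X → Fin (2 * p), (p : ℝ) :=
      Finset.sum_le_sum fun f _ => by exact_mod_cast (hcon f).le
    rw [hdouble, Finset.sum_congr rfl (fun i _ => hcount i)] at hle
    simp only [Finset.sum_const, Finset.card_univ, Fintype.card_fin, Fintype.card_fun,
      Fintype.card_coe, nsmul_eq_mul] at hle
    push_cast at hle
    have hp0 : (0 : ℝ) < p := by positivity
    have hM : (0 : ℝ) < (2 * p : ℝ) ^ X.card * p := by positivity
    have := mul_lt_mul_of_pos_left hprob hM
    linarith
  obtain ⟨f, hf⟩ := hex
  obtain ⟨I, hI, hIc⟩ := Finset.exists_subset_card_eq hf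
  have hch : ∀ i : Fin (2 * p), ∃ A, i ∈ I → A ∈ S ∧ A ⊆ colourClass X (2 * p) f i := by
    intro i
    by_cases hi : i ∈ I
    · have hEi := (Finset.mem_filter.1 (hI hi)).2
      rw [hE] at hEi
      obtain ⟨A, hA⟩ := hEi
      exact ⟨A, fun _ => hA⟩
    · exact ⟨∅, fun h => absurd h hi⟩
  choose g hg using hch
  have hdis : ∀ i ∈ I, ∀ j ∈ I, i ≠ j → Disjoint (g i) (g j) := by
    intro i hi j hj hij
    rw [Finset.disjoint_left]
    intro a ha hb
    obtain ⟨_, h1⟩ := (mem_colourClass _ _ _ _ _).1 ((hg i hi).2 ha)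
    obtain ⟨_, h2⟩ := (mem_colourClass _ _ _ _ _).1 ((hg j hj).2 hb)
    exact hij (h1.symm.trans h2)
  refine ⟨I.image g, ?_, ?_, ?_⟩
  · intro A hA
    obtain ⟨i, hi, rfl⟩ := Finset.mem_image.1 hA
    exact (hg i hi).1
  · rw [Finset.card_image_of_injOn, hIc]
    intro i hi j hj hij
    by_contra hne
    have hd := hdis i hi j hj hne
    have hc := hcard _ (hg i hi).1
    rw [← hij, disjoint_self] at hd
    rw [hd] at hc
    simp at hc
    omega
  · intro A hA B hB hAB
    obtain ⟨i, hi, rfl⟩ := Finset.mem_image.1 (Finset.mem_coe.1 hA)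
    obtain ⟨j, hj, rfl⟩ := Finset.mem_image.1 (Finset.mem_coe.1 hB)
    exact hdis i hi j hj (fun h => hAB (by rw [h]))
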